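/- For every m ≥ 2 there exist constants 0 < c ≤ C depending only on m such that for all x, y > 1 and t > 0 with xy < t, x² ≤ m·t and y² ≤ m·t, one has c·(ln x · ln y / ln²(3t))·p(t,x,y) ≤ p₁(t,x,y) ≤ C·(ln x · ln y / ln²(3t))·p(t,x,y). -/

import Mathlib

open Real MeasureTheory

/-- Modified Bessel function of the first kind, order 0. -/
noncomputable def I0 (z : ℝ) : ℝ := ∑' n : ℕ, (z/2)^(2*n) / ((n.factorial : ℝ))^2

/-- Modified Bessel function of the first kind, order 1. -/
noncomputable def I1 (z : ℝ) : ℝ :=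
  ∑' n : ℕ, (z/2)^(2*n+1) / ((n.factorial : ℝ) * ((n+1).factorial : ℝ))

/-- Heat kernel of the Bessel operator `d²/dx² + (1/x) d/dx` on `(0,∞)`
with respect to the measure `y dy`. -/
noncomputable def pk (t x y : ℝ) : ℝ :=
  t⁻¹ * Real.exp (-(x^2 + y^2)/(2*t)) * I0 (x*y/t)

/-- The function `h` from (AC): Dirichlet heat kernel of `(1/2) d²/dx²` on `(1,∞)`
multiplied by `(xy)⁻¹`. -/
noncomputable def hker (t x y : ℝ) : ℝ :=
  (2*Real.pi*t)^(-(1:ℝ)/2) * (x*y)⁻¹ *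
    (Real.exp (-(x-y)^2/(2*t)) - Real.exp (-(x+y-2)^2/(2*t)))

/-- Bundled hypotheses on the Dirichlet heat kernel `p₁` of the Bessel operator on
`(1,∞)` and on the density `q` of the first hitting time of `1` by the
2-dimensional Bessel process. -/
structure BesselHK (p₁ : ℝ → ℝ → ℝ → ℝ) (q : ℝ → ℝ → ℝ) : Prop where
  meas_p₁ : Measurable fun z : ℝ × ℝ × ℝ => p₁ z.1 z.2.1 z.2.2
  meas_q : Measurable fun z : ℝ × ℝ => q z.1 z.2
  p₁_nonneg : ∀ ⦃t x y : ℝ⦄, 0 < t → 1 < x → 1 < y → 0 ≤ p₁ t x y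
  q_nonneg : ∀ ⦃x s : ℝ⦄, 1 < x → 0 < s → 0 ≤ q x s
  hunt : ∀ ⦃t x y : ℝ⦄, 0 < t → 1 < x → 1 < y →
    p₁ t x y = pk t x y - ∫ u in Set.Ioo 0 t, q x u * pk (t-u) 1 y
  symm : ∀ ⦃t x y : ℝ⦄, 0 < t → 1 < x → 1 < y → p₁ t x y = p₁ t y x
  ck : ∀ ⦃t s x y : ℝ⦄, 0 < t → 0 < s → 1 < x → 1 < y →
    p₁ (t+s) x y = ∫ w in Set.Ioi (1:ℝ), p₁ t x w * p₁ s w y * w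
  mass : ∀ ⦃t x : ℝ⦄, 0 < t → 1 < x →
    (∫ y in Set.Ioi (1:ℝ), p₁ t x y * y) = ∫ u in Set.Ioi t, q x u
  q1 : ∃ c C : ℝ, 0 < c ∧ c ≤ C ∧ ∀ ⦃x s : ℝ⦄, 1 < x → 0 < s →
    ((s < 2*x →
      c * (((x-1)/Real.sqrt x) * s^(-(3:ℝ)/2) * Real.exp (-(x-1)^2/(2*s))) ≤ q x s ∧
      q x s ≤ C * (((x-1)/Real.sqrt x) * s^(-(3:ℝ)/2) * Real.exp (-(x-1)^2/(2*s)))) ∧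
     (2*x ≤ s →
      c * (((x-1)/x) * ((1+Real.log x)/((1+Real.log (s+x))*(1+Real.log (1+s/x)))) *
        s⁻¹ * Real.exp (-(x-1)^2/(2*s))) ≤ q x s ∧
      q x s ≤ C * (((x-1)/x) * ((1+Real.log x)/((1+Real.log (s+x))*(1+Real.log (1+s/x)))) *
        s⁻¹ * Real.exp (-(x-1)^2/(2*s)))))
  q2 : ∀ ⦃x s : ℝ⦄, 1 < x → 0 < s →
    ((x-1)/Real.sqrt (2*Real.pi*x)) * s^(-(3:ℝ)/2) * Real.exp (-(x-1)^2/(2*s)) ≤ q x s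
  surv : ∃ c' C' : ℝ, 0 < c' ∧ c' ≤ C' ∧ ∀ ⦃t x : ℝ⦄, 0 < t → 1 < x →
    c' * min 1 (Real.log x / Real.log (1+Real.sqrt t)) ≤ (∫ u in Set.Ioi t, q x u) ∧
    (∫ u in Set.Ioi t, q x u) ≤ C' * min 1 (Real.log x / Real.log (1+Real.sqrt t))
  ac : ∀ ⦃t x y : ℝ⦄, 0 < t → 1 < x → 1 < y →
    Real.sqrt (x*y) * hker t x y ≤ p₁ t x y ∧
    p₁ t x y ≤ Real.exp (t/8) * Real.sqrt (x*y) * hker t x y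

/-!
Write `t = 3 * a ^ 2` and use the Chapman-Kolmogorov identity over three time steps of length
`a ^ 2`. Bounding the middle factor by `pk ≤ a ^ (-2)` leaves the product of the masses surviving
from `x` and from `y`, which gives the upper bound. For the lower bound the middle factor has to be
at least of order `a ^ (-2)`. By comparison with the half-line this holds when both arguments lie
in an annulus `1 + d * a < w ≤ b * a`, so it suffices that a fixed fraction of the surviving mass
lies there at time `a ^ 2`. Since `p (a ^ 2) x w` is at most of order
`a ^ (-2) * logb (1 + a) x`, with an additional factor `exp (-w / a)` for large `w / a`, the mass
outside the annulus is a small multiple of `logb (1 + a) x` when `d` is small and `b` is large.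
Finally `pk t x y` is of order `t ^ (-1)` as long as `x` and `y` are at most of order `√t`.
-/

/-! ### The Bessel and half-line kernels -/

lemma I0_term_nonneg (z : ℝ) (n : ℕ) : 0 ≤ (z / 2) ^ (2 * n) / (n.factorial : ℝ) ^ 2 := by
  rw [pow_mul]
  positivity

lemma I0_term_le (z : ℝ) (n : ℕ) :
    (z / 2) ^ (2 * n) / (n.factorial : ℝ) ^ 2 ≤ z ^ (2 * n) / ((2 * n).factorial : ℝ) := by
  have hfac : ((2 * n).factorial : ℝ) ≤ 4 ^ n * (n.factorial : ℝ) ^ 2 := by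
    have h := Nat.choose_mul_factorial_mul_factorial (show n ≤ 2 * n by lia)
    rw [← Nat.centralBinom_eq_two_mul_choose, show 2 * n - n = n by lia, mul_assoc, ← sq] at h
    rw [← h]
    exact_mod_cast Nat.mul_le_mul_right _ (Nat.centralBinom_le_four_pow n)
  rw [div_pow, pow_mul 2, div_div, pow_mul z, show (2 : ℝ) ^ 2 = 4 by norm_num]
  gcongr

lemma summable_I0 (z : ℝ) : Summable fun n : ℕ => (z / 2) ^ (2 * n) / (n.factorial : ℝ) ^ 2 :=
  .of_nonneg_of_le (I0_term_nonneg z) (I0_term_le z) (hasSum_cosh z).summable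

lemma one_le_I0 (z : ℝ) : 1 ≤ I0 z := by
  simpa [I0] using (summable_I0 z).le_tsum 0 fun n _ => I0_term_nonneg z n

lemma I0_le_cosh (z : ℝ) : I0 z ≤ cosh z := by
  rw [cosh_eq_tsum]
  exact (summable_I0 z).tsum_le_tsum (I0_term_le z) (hasSum_cosh z).summable

lemma I0_le_exp {z : ℝ} (hz : 0 ≤ z) : I0 z ≤ exp z :=
  (I0_le_cosh z).trans <| by linarith [cosh_add_sinh z, sinh_nonneg_iff.2 hz]

lemma pk_nonneg {t : ℝ} (ht : 0 < t) (x y : ℝ) : 0 ≤ pk t x y := by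
  have := one_le_I0 (x * y / t)
  unfold pk
  positivity

lemma pk_le_gaussian {t x y : ℝ} (ht : 0 < t) (hxy : 0 ≤ x * y) :
    pk t x y ≤ t⁻¹ * exp (-(x - y) ^ 2 / (2 * t)) := by
  calc pk t x y ≤ t⁻¹ * exp (-(x ^ 2 + y ^ 2) / (2 * t)) * exp (x * y / t) := by
        unfold pk
        gcongr
        exact I0_le_exp (div_nonneg hxy ht.le)
    _ = t⁻¹ * exp (-(x - y) ^ 2 / (2 * t)) := by
        rw [mul_assoc, ← exp_add]
        congr 2
        field_simp
        ring

lemma pk_le_inv {t x y : ℝ} (ht : 0 < t) (hxy : 0 ≤ x * y) : pk t x y ≤ t⁻¹ := by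
  refine (pk_le_gaussian ht hxy).trans (mul_le_of_le_one_right (by positivity) ?_)
  rw [exp_le_one_iff, neg_div, neg_nonpos]
  positivity

lemma inv_mul_exp_neg_le_pk {m t x y : ℝ} (ht : 0 < t) (hx : x ^ 2 ≤ m * t) (hy : y ^ 2 ≤ m * t) :
    t⁻¹ * exp (-m) ≤ pk t x y := by
  have hexp : -m ≤ -(x ^ 2 + y ^ 2) / (2 * t) := by
    rw [le_div_iff₀ (by positivity)]
    linarith
  calc t⁻¹ * exp (-m) = t⁻¹ * exp (-m) * 1 := (mul_one _).symm
    _ ≤ pk t x y := by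
        unfold pk
        gcongr
        exact one_le_I0 _

lemma integrable_gaussian_mul {t : ℝ} (ht : 0 < t) (x : ℝ) :
    Integrable fun y : ℝ => exp (-(x - y) ^ 2 / (2 * t)) * y := by
  have hb : 0 < (2 * t)⁻¹ := by positivity
  have h := ((integrable_mul_exp_neg_mul_sq hb).add
    ((integrable_exp_neg_mul_sq hb).const_mul x)).comp_sub_right x
  refine h.congr (.of_forall fun y => ?_)
  have : -(2 * t)⁻¹ * (y - x) ^ 2 = -(x - y) ^ 2 / (2 * t) := by ring
  simp only [Pi.add_apply, this]
  ring

lemma sqrt_mul_hker {t : ℝ} (ht : 0 < t) (x y : ℝ) :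
    √(x * y) * hker t x y = (√(2 * π * t))⁻¹ * (√(x * y))⁻¹ *
      exp (-(x - y) ^ 2 / (2 * t)) * (1 - exp (-(2 * (x - 1) * (y - 1) / t))) := by
  have hpow : (2 * π * t) ^ (-(1 : ℝ) / 2) = (√(2 * π * t))⁻¹ := by
    rw [sqrt_eq_rpow, ← rpow_neg (by positivity), neg_div]
  have hexp : exp (-(x + y - 2) ^ 2 / (2 * t)) =
      exp (-(x - y) ^ 2 / (2 * t)) * exp (-(2 * (x - 1) * (y - 1) / t)) := by
    rw [← exp_add]
    congr 1
    field_simp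
    ring
  have hsqrt : √(x * y) * (x * y)⁻¹ = (√(x * y))⁻¹ := by
    rw [← div_eq_mul_inv, sqrt_div_self]
  rw [hker, hpow, hexp, ← hsqrt]
  ring

lemma one_sub_exp_le_sq_mul_log {t x y : ℝ} (ht : 1 / 8 ≤ t) (hx : 1 < x) (hxy : 4 * x ≤ y) :
    1 - exp (-(2 * (x - 1) * (y - 1) / t)) ≤ 4 * y ^ 2 * log x := by
  have hlog : x - 1 ≤ x * log x := by
    have h := mul_le_mul_of_nonneg_left (one_sub_inv_le_log_of_pos (by linarith : 0 < x))
      (by linarith : 0 ≤ x)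
    rwa [mul_sub, mul_one, mul_inv_cancel₀ (by linarith)] at h
  have hlogx := log_pos hx
  calc 1 - exp (-(2 * (x - 1) * (y - 1) / t)) ≤ 2 * (x - 1) * (y - 1) / t := by
        linarith [one_sub_le_exp_neg (2 * (x - 1) * (y - 1) / t)]
    _ ≤ 16 * ((x - 1) * y) := by
        rw [div_le_iff₀ (by linarith)]
        nlinarith [mul_pos (sub_pos.2 hx) (by linarith : 0 < y)]
    _ ≤ 16 * (x * log x * y) := by gcongr; linarith
    _ ≤ 16 * (y / 4 * log x * y) := by gcongr <;> linarith
    _ = 4 * y ^ 2 * log x := by ring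

lemma sqrt_mul_hker_le {t x y : ℝ} (ht : 1 / 8 ≤ t) (hx : 1 < x) (hxy : 4 * x ≤ y) :
    √(x * y) * hker t x y ≤ 8 * y ^ 2 * log x * exp (-(x - y) ^ 2 / (2 * t)) := by
  have ht_sqrt : (√(2 * π * t))⁻¹ ≤ 2 := by
    rw [inv_le_comm₀ (by positivity) two_pos]
    exact le_sqrt_of_sq_le (by nlinarith [pi_gt_three])
  have hxy_sqrt : (√(x * y))⁻¹ ≤ 1 :=
    inv_le_one_of_one_le₀ (one_le_sqrt.2 (by nlinarith))
  rw [sqrt_mul_hker (by linarith)]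
  calc (√(2 * π * t))⁻¹ * (√(x * y))⁻¹ * exp (-(x - y) ^ 2 / (2 * t)) *
        (1 - exp (-(2 * (x - 1) * (y - 1) / t)))
      ≤ 2 * 1 * exp (-(x - y) ^ 2 / (2 * t)) * (4 * y ^ 2 * log x) := by
        gcongr
        · rw [sub_nonneg, exp_le_one_iff, neg_nonpos]
          have := mul_nonneg (sub_nonneg.2 hx.le) (by linarith : 0 ≤ y - 1)
          rw [mul_assoc]
          positivity
        · exact one_sub_exp_le_sq_mul_log ht hx hxy
    _ = 8 * y ^ 2 * log x * exp (-(x - y) ^ 2 / (2 * t)) := by ring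

lemma exists_le_sqrt_mul_hker {d b : ℝ} (hd : 0 < d) (hb : 0 < b) :
    ∃ κ > 0, ∀ a > 0, ∀ w ∈ Set.Ioc (1 + d * a) (b * a), ∀ v ∈ Set.Ioc (1 + d * a) (b * a),
      κ / a ^ 2 ≤ √(w * v) * hker (a ^ 2) w v := by
  have hexp : 0 < 1 - exp (-(2 * d ^ 2)) := by
    rw [sub_pos, exp_lt_one_iff, neg_lt_zero]
    positivity
  refine ⟨(3 * b)⁻¹ * exp (-(b ^ 2 / 2)) * (1 - exp (-(2 * d ^ 2))), by positivity, ?_⟩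
  rintro a ha w ⟨hdw, hwb⟩ v ⟨hdv, hvb⟩
  have hda : 0 < d * a := by positivity
  have hwv : 0 < w * v := mul_pos (by linarith) (by linarith)
  rw [sqrt_mul_hker (by positivity)]
  have ha_sqrt : √(2 * π * a ^ 2) ≤ 3 * a := by
    rw [sqrt_le_left (by positivity)]
    nlinarith [pi_lt_four]
  have hwv_sqrt : √(w * v) ≤ b * a := by
    rw [sqrt_le_left (by positivity)]
    nlinarith
  have hgauss : -(b ^ 2 / 2) ≤ -(w - v) ^ 2 / (2 * a ^ 2) := by
    rw [le_div_iff₀ (by positivity)]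
    have : (w - v) ^ 2 ≤ (b * a) ^ 2 := sq_le_sq' (by linarith) (by linarith)
    linarith
  have hboundary : 2 * d ^ 2 ≤ 2 * (w - 1) * (v - 1) / a ^ 2 := by
    rw [le_div_iff₀ (by positivity)]
    have : (d * a) * (d * a) ≤ (w - 1) * (v - 1) := by gcongr <;> linarith
    linarith
  calc (3 * b)⁻¹ * exp (-(b ^ 2 / 2)) * (1 - exp (-(2 * d ^ 2))) / a ^ 2
      = (3 * a)⁻¹ * (b * a)⁻¹ * exp (-(b ^ 2 / 2)) * (1 - exp (-(2 * d ^ 2))) := by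
        field_simp
    _ ≤ _ := by gcongr

lemma logb_le_mul_logb {A B x : ℝ} {n : ℕ} (hA : 1 < A) (hB : 1 < B) (hBA : B ≤ A ^ n)
    (hx : 1 ≤ x) : logb A x ≤ n * logb B x := by
  have hlog : log B ≤ n * log A := by
    rw [← log_pow]
    exact log_le_log (by linarith) hBA
  have hlogA := log_pos hA
  have hlogB := log_pos hB
  have hlogx := log_nonneg hx
  rw [logb, logb, ← mul_div_assoc, div_le_div_iff₀ hlogA hlogB]
  nlinarith

lemma log_mul_exp_le_logb_mul_exp {a w x : ℝ} (ha : 1 / 2 ≤ a) (hx : 1 ≤ x) (haw : a ≤ w) :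
    log x * exp (-5 * w) ≤ logb (1 + a) x * exp (-(w / a)) := by
  have hlog : 0 < log (1 + a) := log_pos (by linarith)
  have hlogb : 0 ≤ logb (1 + a) x := logb_nonneg (by linarith) hx
  have hwa : w / a ≤ 2 * w := by
    rw [div_le_iff₀ (by linarith)]
    nlinarith
  calc log x * exp (-5 * w) = logb (1 + a) x * log (1 + a) * exp (-5 * w) := by
        rw [logb, div_mul_cancel₀ _ hlog.ne']
    _ ≤ logb (1 + a) x * exp w * exp (-5 * w) := by
        gcongr
        linarith [log_le_sub_one_of_pos (by linarith : 0 < 1 + a), add_one_le_exp w]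
    _ = logb (1 + a) x * exp (-4 * w) := by rw [mul_assoc, ← exp_add]; ring_nf
    _ ≤ logb (1 + a) x * exp (-(w / a)) := by
        gcongr
        linarith

/-! ### Killed kernels -/

/-- The mass that the measure `p t x y * y dy` gives to `A`. For the Dirichlet heat kernel `p` on
`(1, ∞)` this is the probability that the process started at `x` has not hit `1` by time `t` and
lies in `A` at that time; `A = (1, ∞)` gives the survival probability. -/
noncomputable def massOn (p : ℝ → ℝ → ℝ → ℝ) (t x : ℝ) (A : Set ℝ) : ℝ :=
  ∫ y in A, p t x y * y

/-- Upper survival estimate with constant `C`: the mass left at time `t` is at most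
`C log x / log (1 + √t)`. -/
def SurvivalLE (p : ℝ → ℝ → ℝ → ℝ) (C : ℝ) : Prop :=
  ∀ ⦃t x : ℝ⦄, 0 < t → 1 < x → massOn p t x (Set.Ioi 1) ≤ C * logb (1 + √t) x

/-- Lower survival estimate with constant `c`; the minimum with `1` is needed because `x` may be
far larger than the diffusive scale `√t`. -/
def SurvivalGE (p : ℝ → ℝ → ℝ → ℝ) (c : ℝ) : Prop :=
  ∀ ⦃t x : ℝ⦄, 0 < t → 1 < x → c * min 1 (logb (1 + √t) x) ≤ massOn p t x (Set.Ioi 1)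

/-- Upper comparison with the one-dimensional Dirichlet heat kernel on `(1, ∞)`. The potential that
separates the two generators costs at most the factor `exp (t / 8)`. -/
def HalfLineLE (p : ℝ → ℝ → ℝ → ℝ) : Prop :=
  ∀ ⦃t x y : ℝ⦄, 0 < t → 1 < x → 1 < y → p t x y ≤ exp (t / 8) * (√(x * y) * hker t x y)

/-- Lower comparison with the one-dimensional Dirichlet heat kernel on `(1, ∞)`. -/
def HalfLineGE (p : ℝ → ℝ → ℝ → ℝ) : Prop :=
  ∀ ⦃t x y : ℝ⦄, 0 < t → 1 < x → 1 < y → √(x * y) * hker t x y ≤ p t x y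

lemma HalfLineLE.mul_id_le_log_mul_exp {p : ℝ → ℝ → ℝ → ℝ} {t x y : ℝ} (hLE : HalfLineLE p)
    (ht : 1 / 8 ≤ t) (hx : 1 < x) (hty : 48 * t ≤ y) (hxy : 4 * x ≤ y) :
    p t x y * y ≤ 8 * log x * exp (-10 * y) := by
  have hlogx := log_pos hx
  have hy : 0 < y := by linarith
  have hgauss : exp (t / 8) * exp (-(x - y) ^ 2 / (2 * t)) ≤ exp (-13 * y) := by
    rw [← exp_add, exp_le_exp]
    have : -(x - y) ^ 2 / (2 * t) ≤ -(27 / 2) * y := by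
      rw [div_le_iff₀ (by linarith)]
      nlinarith
    linarith
  have hcube : y ^ 3 ≤ exp (3 * y) := by
    rw [show 3 * y = (3 : ℕ) * y by norm_num, exp_nat_mul]
    gcongr
    linarith [add_one_le_exp y]
  calc p t x y * y
      ≤ exp (t / 8) * (8 * y ^ 2 * log x * exp (-(x - y) ^ 2 / (2 * t))) * y := by
        gcongr
        exact (hLE (by linarith) hx (by linarith)).trans <|
          mul_le_mul_of_nonneg_left (sqrt_mul_hker_le ht hx hxy) (exp_nonneg _)
    _ = 8 * log x * (y ^ 3 * (exp (t / 8) * exp (-(x - y) ^ 2 / (2 * t)))) := by ring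
    _ ≤ 8 * log x * (exp (3 * y) * exp (-13 * y)) := by gcongr
    _ = 8 * log x * exp (-10 * y) := by rw [← exp_add]; ring_nf

lemma SurvivalGE.exists_mul_logb_le_massOn {p : ℝ → ℝ → ℝ → ℝ} {c : ℝ} (hlow : SurvivalGE p c)
    (hc : 0 < c) (μ : ℝ) :
    ∃ k > 0, ∀ a x, 1 / 2 ≤ a → 1 < x → x ≤ μ * a →
      k * logb (1 + a) x ≤ massOn p (a ^ 2) x (Set.Ioi 1) := by
  obtain ⟨n, hn⟩ := pow_unbounded_of_one_lt μ (by norm_num : (1 : ℝ) < 3 / 2)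
  refine ⟨c / (n + 1), by positivity, fun a x ha hx hxa => ?_⟩
  have hlogb : 0 ≤ logb (1 + a) x := logb_nonneg (by linarith) hx.le
  have hlogb_le : logb (1 + a) x ≤ n + 1 := by
    have hpow : x ≤ (1 + a) ^ (n + 1) := by
      calc x ≤ (3 / 2) ^ n * a := hxa.trans (by gcongr)
        _ ≤ (1 + a) ^ n * (1 + a) := by gcongr <;> linarith
        _ = (1 + a) ^ (n + 1) := (pow_succ _ _).symm
    rw [logb_le_iff_le_rpow (by linarith) (by linarith)]
    exact_mod_cast hpow
  have hmin : logb (1 + a) x / (n + 1) ≤ min 1 (logb (1 + a) x) :=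
    le_min (div_le_one_of_le₀ hlogb_le (by positivity)) (div_le_self hlogb (by simp))
  calc c / (n + 1) * logb (1 + a) x = c * (logb (1 + a) x / (n + 1)) := by ring
    _ ≤ c * min 1 (logb (1 + √(a ^ 2)) x) := by
        rw [sqrt_sq (by linarith)]
        gcongr
    _ ≤ massOn p (a ^ 2) x (Set.Ioi 1) := hlow (by positivity) hx

/-- A symmetric semigroup of kernels on `(1, ∞)` with respect to `y dy`, dominated by
the Bessel heat kernel `pk`. It stands for the properties of a heat kernel with killing that do not
depend on the killing mechanism; values outside `(1, ∞)` and for `t ≤ 0` are unconstrained. -/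
structure KilledKernel (p : ℝ → ℝ → ℝ → ℝ) : Prop where
  measurable : Measurable fun z : ℝ × ℝ × ℝ => p z.1 z.2.1 z.2.2
  nonneg : ∀ ⦃t x y : ℝ⦄, 0 < t → 1 < x → 1 < y → 0 ≤ p t x y
  le_pk : ∀ ⦃t x y : ℝ⦄, 0 < t → 1 < x → 1 < y → p t x y ≤ pk t x y
  symm : ∀ ⦃t x y : ℝ⦄, 0 < t → 1 < x → 1 < y → p t x y = p t y x
  chapman_kolmogorov : ∀ ⦃t s x y : ℝ⦄, 0 < t → 0 < s → 1 < x → 1 < y →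
    p (t + s) x y = ∫ w in Set.Ioi (1 : ℝ), p t x w * p s w y * w

namespace KilledKernel

open Set

variable {p : ℝ → ℝ → ℝ → ℝ} {t s x y B : ℝ} {A : Set ℝ}

lemma measurable_right (H : KilledKernel p) (t x : ℝ) : Measurable fun y => p t x y :=
  H.measurable.comp (by fun_prop : Measurable fun y : ℝ => (t, x, y))

lemma measurable_left (H : KilledKernel p) (t y : ℝ) : Measurable fun x => p t x y :=
  H.measurable.comp (by fun_prop : Measurable fun x : ℝ => (t, x, y))

lemma le_gaussian (H : KilledKernel p) (ht : 0 < t) (hx : 1 < x) (hy : 1 < y) :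
    p t x y ≤ t⁻¹ * exp (-(x - y) ^ 2 / (2 * t)) :=
  (H.le_pk ht hx hy).trans (pk_le_gaussian ht (by positivity))

lemma le_inv (H : KilledKernel p) (ht : 0 < t) (hx : 1 < x) (hy : 1 < y) : p t x y ≤ t⁻¹ :=
  (H.le_pk ht hx hy).trans (pk_le_inv ht (by positivity))

lemma mul_id_nonneg (H : KilledKernel p) (ht : 0 < t) (hx : 1 < x) (hy : 1 < y) :
    0 ≤ p t x y * y :=
  mul_nonneg (H.nonneg ht hx hy) (by linarith)

lemma integrableOn_mul_id (H : KilledKernel p) (ht : 0 < t) (hx : 1 < x) :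
    IntegrableOn (fun y => p t x y * y) (Ioi 1) := by
  refine ((integrable_gaussian_mul ht x).const_mul t⁻¹).integrableOn.mono'
    ((H.measurable_right t x).mul measurable_id).aestronglyMeasurable ?_
  filter_upwards [ae_restrict_mem measurableSet_Ioi] with y (hy : 1 < y)
  rw [norm_of_nonneg (H.mul_id_nonneg ht hx hy), ← mul_assoc]
  gcongr
  exact H.le_gaussian ht hx hy

lemma integrableOn_chapman_kolmogorov (H : KilledKernel p) (ht : 0 < t) (hs : 0 < s) (hx : 1 < x)
    (hy : 1 < y) : IntegrableOn (fun w => p t x w * p s w y * w) (Ioi 1) := by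
  refine ((H.integrableOn_mul_id ht hx).const_mul s⁻¹).mono' (((H.measurable_right t x).mul
    (H.measurable_left s y)).mul measurable_id).aestronglyMeasurable ?_
  filter_upwards [ae_restrict_mem measurableSet_Ioi] with w (hw : 1 < w)
  have hpw := H.mul_id_nonneg ht hx hw
  rw [mul_right_comm, norm_of_nonneg (mul_nonneg hpw (H.nonneg hs hw hy)), mul_comm s⁻¹]
  gcongr
  exact H.le_inv hs hw hy

lemma massOn_nonneg (H : KilledKernel p) (ht : 0 < t) (hx : 1 < x) (hA : MeasurableSet A)
    (hA1 : A ⊆ Ioi 1) : 0 ≤ massOn p t x A :=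
  setIntegral_nonneg hA fun _ hy => H.mul_id_nonneg ht hx (hA1 hy)

lemma massOn_mono (H : KilledKernel p) (ht : 0 < t) (hx : 1 < x) (hA1 : A ⊆ Ioi 1) :
    massOn p t x A ≤ massOn p t x (Ioi 1) := by
  refine setIntegral_mono_set (H.integrableOn_mul_id ht hx) ?_ (.of_forall hA1)
  filter_upwards [ae_restrict_mem measurableSet_Ioi] with y hy
  exact H.mul_id_nonneg ht hx hy

lemma massOn_Ioi_eq_add (H : KilledKernel p) (ht : 0 < t) (hx : 1 < x) {r R : ℝ} (hr : 1 ≤ r)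
    (hrR : r ≤ R) : massOn p t x (Ioi r) = massOn p t x (Ioc r R) + massOn p t x (Ioi R) := by
  have hint := (H.integrableOn_mul_id ht hx).mono_set (Ioi_subset_Ioi hr)
  rw [massOn, ← Ioc_union_Ioi_eq_Ioi hrR]
  exact setIntegral_union (Ioc_disjoint_Ioi le_rfl) measurableSet_Ioi
    (hint.mono_set Ioc_subset_Ioi_self) (hint.mono_set (Ioi_subset_Ioi hrR))

lemma setIntegral_chapman_kolmogorov_le (H : KilledKernel p) (ht : 0 < t) (hs : 0 < s) (hx : 1 < x)
    (hy : 1 < y) (hA : MeasurableSet A) (hA1 : A ⊆ Ioi 1) (hB : ∀ w ∈ A, p s w y ≤ B) :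
    ∫ w in A, p t x w * p s w y * w ≤ B * massOn p t x A := by
  rw [massOn, ← integral_const_mul]
  refine setIntegral_mono_on ((H.integrableOn_chapman_kolmogorov ht hs hx hy).mono_set hA1)
    (((H.integrableOn_mul_id ht hx).mono_set hA1).const_mul B) hA fun w hw => ?_
  rw [mul_right_comm, mul_comm B]
  exact mul_le_mul_of_nonneg_left (hB w hw) (H.mul_id_nonneg ht hx (hA1 hw))

lemma add_le_mul_massOn (H : KilledKernel p) (ht : 0 < t) (hs : 0 < s) (hx : 1 < x) (hy : 1 < y)
    (hB : ∀ w, 1 < w → p s w y ≤ B) : p (t + s) x y ≤ B * massOn p t x (Ioi 1) := by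
  rw [H.chapman_kolmogorov ht hs hx hy]
  exact H.setIntegral_chapman_kolmogorov_le ht hs hx hy measurableSet_Ioi subset_rfl hB

lemma add_le_mul_massOn_add_mul_massOn (H : KilledKernel p) (ht : 0 < t) (hs : 0 < s) (hx : 1 < x)
    (hy : 1 < y) {R B' : ℝ} (hR : 1 ≤ R) (hB : ∀ w ∈ Ioc 1 R, p s w y ≤ B)
    (hB' : ∀ w ∈ Ioi R, p s w y ≤ B') :
    p (t + s) x y ≤ B * massOn p t x (Ioc 1 R) + B' * massOn p t x (Ioi R) := by
  have hint := H.integrableOn_chapman_kolmogorov ht hs hx hy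
  rw [H.chapman_kolmogorov ht hs hx hy, ← Ioc_union_Ioi_eq_Ioi hR,
    setIntegral_union (Ioc_disjoint_Ioi le_rfl) measurableSet_Ioi
      (hint.mono_set Ioc_subset_Ioi_self) (hint.mono_set (Ioi_subset_Ioi hR))]
  exact add_le_add
    (H.setIntegral_chapman_kolmogorov_le ht hs hx hy measurableSet_Ioc Ioc_subset_Ioi_self hB)
    (H.setIntegral_chapman_kolmogorov_le ht hs hx hy measurableSet_Ioi (Ioi_subset_Ioi hR) hB')

lemma mul_massOn_le_add (H : KilledKernel p) (ht : 0 < t) (hs : 0 < s) (hx : 1 < x) (hy : 1 < y)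
    (hA : MeasurableSet A) (hA1 : A ⊆ Ioi 1) (hB : ∀ w ∈ A, B ≤ p s w y) :
    B * massOn p t x A ≤ p (t + s) x y := by
  have hint := H.integrableOn_chapman_kolmogorov ht hs hx hy
  rw [H.chapman_kolmogorov ht hs hx hy, massOn, ← integral_const_mul]
  calc ∫ w in A, B * (p t x w * w) ≤ ∫ w in A, p t x w * p s w y * w := by
        refine setIntegral_mono_on (((H.integrableOn_mul_id ht hx).mono_set hA1).const_mul B)
          (hint.mono_set hA1) hA fun w hw => ?_
        rw [mul_right_comm, mul_comm B]
        exact mul_le_mul_of_nonneg_left (hB w hw) (H.mul_id_nonneg ht hx (hA1 hw))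
    _ ≤ ∫ w in Ioi 1, p t x w * p s w y * w := by
        refine setIntegral_mono_set hint ?_ (.of_forall hA1)
        filter_upwards [ae_restrict_mem measurableSet_Ioi] with w (hw : 1 < w)
        exact mul_nonneg (mul_nonneg (H.nonneg ht hx hw) (H.nonneg hs hw hy)) (by linarith)

lemma three_mul_le_mul_massOn_mul_massOn (H : KilledKernel p) (hs : 0 < s) (hx : 1 < x)
    (hy : 1 < y) : p (3 * s) x y ≤ s⁻¹ * massOn p s x (Ioi 1) * massOn p s y (Ioi 1) := by
  have htwo : ∀ w, 1 < w → p (2 * s) w x ≤ s⁻¹ * massOn p s x (Ioi 1) := fun w hw => by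
    rw [H.symm (by positivity) hw hx, two_mul]
    exact H.add_le_mul_massOn hs hs hx hw fun v hv => H.le_inv hs hv hw
  rw [H.symm (by positivity) hx hy, show 3 * s = s + 2 * s by ring]
  exact H.add_le_mul_massOn hs (by positivity) hy hx htwo

lemma mul_massOn_mul_massOn_le_three_mul (H : KilledKernel p) (hs : 0 < s) (hx : 1 < x) (hy : 1 < y)
    (hA : MeasurableSet A) (hA1 : A ⊆ Ioi 1) (hB : ∀ w ∈ A, ∀ v ∈ A, B ≤ p s w v) :
    B * massOn p s x A * massOn p s y A ≤ p (3 * s) x y := by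
  have htwo : ∀ v ∈ A, B * massOn p s x A ≤ p (2 * s) v x := fun v hv => by
    rw [H.symm (by positivity) (hA1 hv) hx, two_mul]
    exact H.mul_massOn_le_add hs hs hx (hA1 hv) hA hA1 fun w hw => hB w hw v hv
  rw [H.symm (by positivity) hx hy, show 3 * s = s + 2 * s by ring]
  exact H.mul_massOn_le_add hs (by positivity) hy hx hA hA1 htwo

/-! ### Localization of the surviving mass -/

variable {a b d c C w : ℝ}

lemma survivalLE_const_nonneg (H : KilledKernel p) (hup : SurvivalLE p C) : 0 ≤ C := by
  have hmass := (H.massOn_nonneg one_pos one_lt_two measurableSet_Ioi subset_rfl).trans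
    (hup one_pos one_lt_two)
  exact nonneg_of_mul_nonneg_left hmass (logb_pos (by norm_num) one_lt_two)

lemma massOn_le_mul_logb (H : KilledKernel p) (hup : SurvivalLE p C) (ht : 0 < t) (ha : 0 < a)
    (hx : 1 < x) {n : ℕ} (hn : 1 + a ≤ (1 + √t) ^ n) :
    massOn p t x (Ioi 1) ≤ C * (n * logb (1 + a) x) := by
  have := H.survivalLE_const_nonneg hup
  refine (hup ht hx).trans ?_
  gcongr
  exact logb_le_mul_logb (by simpa using ht) (by linarith) hn hx.le

lemma sq_le_mul_logb (H : KilledKernel p) (hup : SurvivalLE p C) (ha : 0 < a) (hx : 1 < x)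
    (hw : 1 < w) : p (a ^ 2) x w ≤ 4 * C * logb (1 + a) x / a ^ 2 := by
  have ht : 0 < a ^ 2 / 2 := by positivity
  have hscale : 1 + a ≤ (1 + √(a ^ 2 / 2)) ^ 2 := by
    have : a / 2 ≤ √(a ^ 2 / 2) := le_sqrt_of_sq_le (by nlinarith)
    nlinarith
  calc p (a ^ 2) x w = p (a ^ 2 / 2 + a ^ 2 / 2) x w := by rw [add_halves]
    _ ≤ (a ^ 2 / 2)⁻¹ * massOn p (a ^ 2 / 2) x (Ioi 1) :=
        H.add_le_mul_massOn ht ht hx hw fun v hv => H.le_inv ht hv hw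
    _ ≤ (a ^ 2 / 2)⁻¹ * (C * ((2 : ℕ) * logb (1 + a) x)) := by
        gcongr
        exact H.massOn_le_mul_logb hup ht ha hx hscale
    _ = 4 * C * logb (1 + a) x / a ^ 2 := by
        push_cast
        field_simp
        ring

lemma massOn_Ioi_le_log_mul_exp (H : KilledKernel p) (hLE : HalfLineLE p) (ht : 1 / 8 ≤ t)
    (hx : 1 < x) {R : ℝ} (htR : 48 * t ≤ R) (hxR : 4 * x ≤ R) :
    massOn p t x (Ioi R) ≤ log x * exp (-10 * R) := by
  have hlogx := log_pos hx
  have hneg : (-10 : ℝ) < 0 := by norm_num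
  calc massOn p t x (Ioi R) ≤ ∫ y in Ioi R, 8 * log x * exp (-10 * y) := by
        refine setIntegral_mono_on
          ((H.integrableOn_mul_id (by linarith) hx).mono_set (Ioi_subset_Ioi (by linarith)))
          ((integrableOn_exp_mul_Ioi hneg R).const_mul _) measurableSet_Ioi fun y (hy : R < y) => ?_
        exact hLE.mul_id_le_log_mul_exp ht hx (by linarith) (by linarith)
    _ = 4 / 5 * (log x * exp (-10 * R)) := by
        rw [integral_const_mul, integral_exp_mul_Ioi hneg]
        ring
    _ ≤ log x * exp (-10 * R) := mul_le_of_le_one_left (by positivity) (by norm_num)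

lemma le_inv_mul_exp_of_le_half (H : KilledKernel p) (ha : 0 < a) (ht : 0 < t) (hta : t ≤ a ^ 2)
    (hx : 1 < x) (haw : 24 * a ≤ w) (hxw : x ≤ w / 2) : p t x w ≤ t⁻¹ * exp (-(w / a)) := by
  refine (H.le_gaussian ht hx (by linarith)).trans ?_
  gcongr
  rw [neg_div, neg_le_neg_iff, div_le_div_iff₀ ha (by positivity)]
  have hdist : 6 * a * w ≤ (x - w) ^ 2 := by nlinarith
  nlinarith [mul_le_mul_of_nonneg_left hta (by linarith : 0 ≤ w),
    mul_le_mul_of_nonneg_right hdist ha.le, mul_pos (mul_pos ha ha) (by linarith : 0 < w)]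

-- Splitting at time `a / 4` keeps the factor `log x`: the early mass is controlled by the survival
-- estimate or, beyond `w / 2`, by the comparison with the half-line, whose loss `exp (a / 32)` is
-- harmless there, and only the remaining time has to produce Gaussian decay.
lemma sq_le_mul_logb_mul_exp (H : KilledKernel p) (hup : SurvivalLE p C) (hLE : HalfLineLE p)
    (ha : 1 / 2 ≤ a) (hx : 1 < x) (haw : 24 * a ≤ w) (hxw : 8 * x ≤ w) :
    p (a ^ 2) x w ≤ (8 * C + 2) * logb (1 + a) x / a ^ 2 * exp (-(w / a)) := by
  have hr : 0 < a / 4 := by linarith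
  have hw : 1 < w := by linarith
  obtain ⟨u, hu⟩ : ∃ u, a ^ 2 = a / 4 + u := ⟨a ^ 2 - a / 4, by ring⟩
  have hu_half : a ^ 2 / 2 ≤ u := by nlinarith
  have hu_pos : 0 < u := by nlinarith
  have hu_inv : u⁻¹ ≤ 2 / a ^ 2 := by
    rw [← inv_div]
    gcongr
  have hnear : ∀ v ∈ Ioc 1 (w / 2), p u v w ≤ 2 / a ^ 2 * exp (-(w / a)) := fun v hv =>
    (H.le_inv_mul_exp_of_le_half (by linarith) hu_pos (by linarith) hv.1 haw hv.2).trans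
      (by gcongr)
  have hfar : ∀ v ∈ Ioi (w / 2), p u v w ≤ 2 / a ^ 2 := fun v (hv : w / 2 < v) =>
    (H.le_inv hu_pos (by linarith) hw).trans hu_inv
  have hscale : 1 + a ≤ (1 + √(a / 4)) ^ 4 := by
    have hsq := sq_sqrt hr.le
    have hsqrt := sqrt_nonneg (a / 4)
    nlinarith [pow_nonneg hsqrt 3, pow_nonneg hsqrt 4]
  have hmass := (H.massOn_mono hr hx (A := Ioc 1 (w / 2)) Ioc_subset_Ioi_self).trans
    (H.massOn_le_mul_logb hup hr (by linarith) hx hscale)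
  have htail : massOn p (a / 4) x (Ioi (w / 2)) ≤ logb (1 + a) x * exp (-(w / a)) := by
    refine (H.massOn_Ioi_le_log_mul_exp hLE (by linarith) hx (by linarith) (by linarith)).trans ?_
    rw [show -10 * (w / 2) = -5 * w by ring]
    exact log_mul_exp_le_logb_mul_exp ha hx.le (by linarith)
  calc p (a ^ 2) x w ≤ 2 / a ^ 2 * exp (-(w / a)) * massOn p (a / 4) x (Ioc 1 (w / 2)) +
        2 / a ^ 2 * massOn p (a / 4) x (Ioi (w / 2)) := by
        rw (occs := .pos [1]) [hu]
        exact H.add_le_mul_massOn_add_mul_massOn hr hu_pos hx hw (by linarith) hnear hfar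
    _ ≤ 2 / a ^ 2 * exp (-(w / a)) * (C * ((4 : ℕ) * logb (1 + a) x)) +
        2 / a ^ 2 * (logb (1 + a) x * exp (-(w / a))) := by gcongr
    _ = (8 * C + 2) * logb (1 + a) x / a ^ 2 * exp (-(w / a)) := by
        push_cast
        ring

lemma massOn_Ioc_le_mul_logb (H : KilledKernel p) (hup : SurvivalLE p C) (ha : 1 / 2 ≤ a)
    (hx : 1 < x) (hd : 0 ≤ d) (hd1 : d ≤ 1) :
    massOn p (a ^ 2) x (Ioc 1 (1 + d * a)) ≤ 12 * C * d * logb (1 + a) x := by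
  have ha0 : 0 < a := by linarith
  have hda : 0 ≤ d * a := by positivity
  calc massOn p (a ^ 2) x (Ioc 1 (1 + d * a))
      ≤ ∫ _ in Ioc 1 (1 + d * a), 4 * C * logb (1 + a) x / a ^ 2 * (3 * a) := by
        refine setIntegral_mono_on
          ((H.integrableOn_mul_id (by positivity) hx).mono_set Ioc_subset_Ioi_self)
          (integrableOn_const measure_Ioc_lt_top.ne) measurableSet_Ioc fun w hw => ?_
        have hw0 : 0 < w := by linarith [hw.1]
        have hnonneg := H.nonneg (by positivity : 0 < a ^ 2) hx hw.1
        have hle := H.sq_le_mul_logb hup ha0 hx hw.1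
        exact mul_le_mul hle (by nlinarith [hw.2]) hw0.le (hnonneg.trans hle)
    _ = 12 * C * d * logb (1 + a) x := by
        rw [setIntegral_const, volume_real_Ioc_of_le (by linarith), smul_eq_mul]
        field_simp
        ring

lemma massOn_Ioi_le_mul_logb (H : KilledKernel p) (hup : SurvivalLE p C) (hLE : HalfLineLE p)
    (ha : 1 / 2 ≤ a) (hx : 1 < x) (hb : 24 ≤ b) (hxb : 8 * x ≤ b * a) :
    massOn p (a ^ 2) x (Ioi (b * a)) ≤ 4 * (8 * C + 2) * exp (-(b / 2)) * logb (1 + a) x := by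
  have ha0 : 0 < a := by linarith
  have hneg : -(2 * a)⁻¹ < 0 := by rw [neg_lt_zero]; positivity
  have hC := H.survivalLE_const_nonneg hup
  have hlogb : 0 ≤ logb (1 + a) x := logb_nonneg (by linarith) hx.le
  calc massOn p (a ^ 2) x (Ioi (b * a))
      ≤ ∫ w in Ioi (b * a),
          (8 * C + 2) * logb (1 + a) x / a ^ 2 * (2 * a) * exp (-(2 * a)⁻¹ * w) := by
        refine setIntegral_mono_on
          ((H.integrableOn_mul_id (by positivity) hx).mono_set (Ioi_subset_Ioi (by linarith)))
          ((integrableOn_exp_mul_Ioi hneg _).const_mul _) measurableSet_Ioi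
          fun w (hw : b * a < w) => ?_
        have hwa : w ≤ 2 * a * exp ((2 * a)⁻¹ * w) := by
          rw [← div_le_iff₀' (by positivity), div_eq_inv_mul]
          linarith [add_one_le_exp ((2 * a)⁻¹ * w)]
        have hexp : exp (-(w / a)) * exp ((2 * a)⁻¹ * w) = exp (-(2 * a)⁻¹ * w) := by
          rw [← exp_add]
          congr 1
          field_simp
          ring
        calc p (a ^ 2) x w * w ≤ (8 * C + 2) * logb (1 + a) x / a ^ 2 * exp (-(w / a)) *
              (2 * a * exp ((2 * a)⁻¹ * w)) :=
              mul_le_mul (H.sq_le_mul_logb_mul_exp hup hLE ha hx (by nlinarith) (by linarith)) hwa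
                (by linarith) (by positivity)
          _ = _ := by rw [← hexp]; ring
    _ = 4 * (8 * C + 2) * exp (-(b / 2)) * logb (1 + a) x := by
        rw [integral_const_mul, integral_exp_mul_Ioi hneg,
          show -(2 * a)⁻¹ * (b * a) = -(b / 2) by field_simp]
        field_simp
        ring

lemma exists_mul_logb_le_massOn_annulus (H : KilledKernel p) (hc : 0 < c) (hlow : SurvivalGE p c)
    (hup : SurvivalLE p C) (hLE : HalfLineLE p) (μ : ℝ) :
    ∃ d > 0, ∃ b > 0, ∃ k > 0, ∀ a x, 1 / 2 ≤ a → 1 < x → x ≤ μ * a →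
      k * logb (1 + a) x ≤ massOn p (a ^ 2) x (Ioc (1 + d * a) (b * a)) := by
  obtain ⟨k, hk, hsurv⟩ := hlow.exists_mul_logb_le_massOn hc μ
  have hC := H.survivalLE_const_nonneg hup
  obtain ⟨d, hd, hd1, hdk⟩ : ∃ d > 0, d ≤ 1 ∧ 12 * C * d ≤ k / 4 := by
    refine ⟨k / (48 * C + k), by positivity, div_le_one_of_le₀ (by linarith) (by positivity), ?_⟩
    rw [← mul_div_assoc, div_le_iff₀ (by positivity)]
    nlinarith
  obtain ⟨b, hbk, hb, hbμ⟩ :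
      ∃ b, 4 * (8 * C + 2) * exp (-(b / 2)) ≤ k / 4 ∧ 24 ≤ b ∧ 8 * μ ≤ b := by
    have hlim : Filter.Tendsto (fun b => 4 * (8 * C + 2) * exp (-(b / 2))) .atTop (nhds 0) := by
      simpa using (tendsto_exp_neg_atTop_nhds_zero.comp
        (Filter.tendsto_id.atTop_div_const two_pos)).const_mul (4 * (8 * C + 2))
    exact ((hlim.eventually_le_const (by positivity)).and
      ((Filter.eventually_ge_atTop 24).and (Filter.eventually_ge_atTop (8 * μ)))).exists
  refine ⟨d, hd, b, by linarith, k / 2, by positivity, fun a x ha hx hxa => ?_⟩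
  have ha2 : 0 < a ^ 2 := by positivity
  have hda : 0 < d * a := by positivity
  have hlogb : 0 ≤ logb (1 + a) x := logb_nonneg (by linarith) hx.le
  have hsplit := H.massOn_Ioi_eq_add ha2 hx le_rfl (by linarith : 1 ≤ 1 + d * a)
  rw [H.massOn_Ioi_eq_add ha2 hx (by linarith) (by nlinarith : 1 + d * a ≤ b * a)] at hsplit
  have hnear := (H.massOn_Ioc_le_mul_logb hup ha hx hd.le hd1).trans
    (mul_le_mul_of_nonneg_right hdk hlogb)
  have hfar := (H.massOn_Ioi_le_mul_logb hup hLE ha hx hb (by nlinarith)).trans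
    (mul_le_mul_of_nonneg_right hbk hlogb)
  linarith [hsurv a x ha hx hxa]

/-! ### Two-sided bounds at the diffusive scale -/

lemma exists_le_mul_logb_mul_logb_mul_pk (H : KilledKernel p) (hup : SurvivalLE p C) (m : ℝ) :
    ∃ K, ∀ t x y, 1 ≤ t → 1 < x → 1 < y → x ^ 2 ≤ m * t → y ^ 2 ≤ m * t →
      p t x y ≤ K * (logb (3 * t) x * logb (3 * t) y) * pk t x y := by
  have hC := H.survivalLE_const_nonneg hup
  refine ⟨48 * C ^ 2 * exp m, fun t x y ht hx hy hxm hym => ?_⟩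
  have ht3 : 0 < t / 3 := by linarith
  have hlogb : ∀ z, 1 < z → 0 ≤ logb (3 * t) z := fun z hz => logb_nonneg (by linarith) hz.le
  have hscale : 1 + (3 * t - 1) ≤ (1 + √(t / 3)) ^ 4 := by
    have hamgm : 4 * √(t / 3) ≤ (1 + √(t / 3)) ^ 2 := by linarith [four_mul_le_sq_add 1 √(t / 3)]
    calc 1 + (3 * t - 1) = 9 * √(t / 3) ^ 2 := by linarith [sq_sqrt ht3.le]
      _ ≤ (4 * √(t / 3)) ^ 2 := by nlinarith [sq_nonneg √(t / 3)]
      _ ≤ ((1 + √(t / 3)) ^ 2) ^ 2 := by gcongr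
      _ = (1 + √(t / 3)) ^ 4 := by rw [← pow_mul]
  have hmass : ∀ z, 1 < z → massOn p (t / 3) z (Ioi 1) ≤ 4 * C * logb (3 * t) z := fun z hz => by
    have h := H.massOn_le_mul_logb hup ht3 (by linarith) hz hscale
    rw [add_sub_cancel] at h
    push_cast at h
    linarith
  have hpk : t⁻¹ ≤ exp m * pk t x y := by
    have h := inv_mul_exp_neg_le_pk (by linarith) hxm hym
    rwa [exp_neg, ← div_eq_mul_inv, div_le_iff₀' (exp_pos m)] at h
  calc p t x y = p (3 * (t / 3)) x y := by rw [mul_div_cancel₀ _ three_ne_zero]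
    _ ≤ (t / 3)⁻¹ * massOn p (t / 3) x (Ioi 1) * massOn p (t / 3) y (Ioi 1) :=
        H.three_mul_le_mul_massOn_mul_massOn ht3 hx hy
    _ ≤ (t / 3)⁻¹ * (4 * C * logb (3 * t) x) * (4 * C * logb (3 * t) y) := by
        have := hlogb x hx
        gcongr
        · exact H.massOn_nonneg ht3 hy measurableSet_Ioi subset_rfl
        · exact hmass x hx
        · exact hmass y hy
    _ = 48 * C ^ 2 * (logb (3 * t) x * logb (3 * t) y) * t⁻¹ := by
        rw [inv_div]
        ring
    _ ≤ 48 * C ^ 2 * (logb (3 * t) x * logb (3 * t) y) * (exp m * pk t x y) := by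
        have := mul_nonneg (hlogb x hx) (hlogb y hy)
        gcongr
    _ = 48 * C ^ 2 * exp m * (logb (3 * t) x * logb (3 * t) y) * pk t x y := by ring

lemma exists_mul_logb_le_massOn_annulus_of_sq_le (H : KilledKernel p) (hc : 0 < c)
    (hlow : SurvivalGE p c) (hup : SurvivalLE p C) (hLE : HalfLineLE p) (m : ℝ) :
    ∃ d > 0, ∃ b > 0, ∃ k > 0, ∀ t x, 1 ≤ t → 1 < x → x ^ 2 ≤ m * t →
      k * logb (3 * t) x ≤ massOn p (t / 3) x (Ioc (1 + d * √(t / 3)) (b * √(t / 3))) := by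
  obtain ⟨d, hd, b, hb, k, hk, hmass⟩ :=
    H.exists_mul_logb_le_massOn_annulus hc hlow hup hLE √(3 * m)
  refine ⟨d, hd, b, hb, k, hk, fun t x ht hx hxm => ?_⟩
  have hsq : √(t / 3) ^ 2 = t / 3 := sq_sqrt (by linarith)
  have hhalf : 1 / 2 ≤ √(t / 3) := le_sqrt_of_sq_le (by linarith)
  have hscale : x ≤ √(3 * m) * √(t / 3) := by
    rw [← sqrt_mul' _ (by linarith)]
    exact le_sqrt_of_sq_le (by linarith)
  have hbase : 1 + √(t / 3) ≤ (3 * t) ^ 1 := by nlinarith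
  have hlogb := logb_le_mul_logb (by linarith) (by linarith) hbase hx.le
  rw [Nat.cast_one, one_mul] at hlogb
  have h := hmass √(t / 3) x hhalf hx hscale
  rw [hsq] at h
  exact (mul_le_mul_of_nonneg_left hlogb hk.le).trans h

lemma exists_mul_logb_mul_logb_mul_pk_le (H : KilledKernel p) (hc : 0 < c) (hlow : SurvivalGE p c)
    (hup : SurvivalLE p C) (hLE : HalfLineLE p) (hGE : HalfLineGE p) (m : ℝ) :
    ∃ k > 0, ∀ t x y, 1 ≤ t → 1 < x → 1 < y → x ^ 2 ≤ m * t → y ^ 2 ≤ m * t →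
      k * (logb (3 * t) x * logb (3 * t) y) * pk t x y ≤ p t x y := by
  obtain ⟨d, hd, b, hb, k, hk, hmass⟩ :=
    H.exists_mul_logb_le_massOn_annulus_of_sq_le hc hlow hup hLE m
  obtain ⟨κ, hκ, hker_ge⟩ := exists_le_sqrt_mul_hker hd hb
  refine ⟨3 * κ * k ^ 2, by positivity, fun t x y ht hx hy hxm hym => ?_⟩
  have ht3 : 0 < t / 3 := by linarith
  set A := Ioc (1 + d * √(t / 3)) (b * √(t / 3))
  have hA1 : A ⊆ Ioi 1 := fun w hw => (lt_add_of_pos_right 1 (by positivity)).trans hw.1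
  have hA : ∀ w ∈ A, ∀ v ∈ A, κ / (t / 3) ≤ p (t / 3) w v := fun w hw v hv => by
    have h := hker_ge √(t / 3) (sqrt_pos.2 ht3) w hw v hv
    rw [sq_sqrt ht3.le] at h
    exact h.trans (hGE ht3 (hA1 hw) (hA1 hv))
  have hlogx : 0 ≤ logb (3 * t) x := logb_nonneg (by linarith) hx.le
  have hlogy : 0 ≤ logb (3 * t) y := logb_nonneg (by linarith) hy.le
  calc 3 * κ * k ^ 2 * (logb (3 * t) x * logb (3 * t) y) * pk t x y
      ≤ 3 * κ * k ^ 2 * (logb (3 * t) x * logb (3 * t) y) * t⁻¹ := by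
        gcongr
        exact pk_le_inv (by linarith) (by positivity)
    _ = κ / (t / 3) * (k * logb (3 * t) x) * (k * logb (3 * t) y) := by
        field_simp
    _ ≤ κ / (t / 3) * massOn p (t / 3) x A * massOn p (t / 3) y A := by
        have := H.massOn_nonneg ht3 hx measurableSet_Ioc hA1
        gcongr
        · exact hmass t x ht hx hxm
        · exact hmass t y ht hy hym
    _ ≤ p (3 * (t / 3)) x y :=
        H.mul_massOn_mul_massOn_le_three_mul ht3 hx hy measurableSet_Ioc hA1 hA
    _ = p t x y := by rw [mul_div_cancel₀ _ three_ne_zero]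

end KilledKernel

namespace BesselHK

variable {p₁ : ℝ → ℝ → ℝ → ℝ} {q : ℝ → ℝ → ℝ}

lemma killedKernel (H : BesselHK p₁ q) : KilledKernel p₁ where
  measurable := H.meas_p₁
  nonneg := H.p₁_nonneg
  le_pk t x y ht hx hy := by
    rw [H.hunt ht hx hy, sub_le_self_iff]
    exact setIntegral_nonneg measurableSet_Ioo fun u hu =>
      mul_nonneg (H.q_nonneg hx hu.1) (pk_nonneg (sub_pos.2 hu.2) 1 y)
  symm := H.symm
  chapman_kolmogorov := H.ck

lemma exists_survivalGE_survivalLE (H : BesselHK p₁ q) :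
    ∃ c C, 0 < c ∧ SurvivalGE p₁ c ∧ SurvivalLE p₁ C := by
  obtain ⟨c, C, hc, hcC, hsurv⟩ := H.surv
  refine ⟨c, C, hc, fun t x ht hx => ?_, fun t x ht hx => ?_⟩
  · rw [massOn, H.mass ht hx]
    exact (hsurv ht hx).1
  · rw [massOn, H.mass ht hx]
    exact (hsurv ht hx).2.trans
      (mul_le_mul_of_nonneg_left (min_le_right _ _) (hc.le.trans hcC))

lemma halfLineLE (H : BesselHK p₁ q) : HalfLineLE p₁ := fun _ _ _ ht hx hy =>
  (H.ac ht hx hy).2.trans_eq (mul_assoc _ _ _)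

lemma halfLineGE (H : BesselHK p₁ q) : HalfLineGE p₁ := fun _ _ _ ht hx hy => (H.ac ht hx hy).1

end BesselHK

theorem bessel_heat_kernel_estimate_both_small_general {p : ℝ → ℝ → ℝ → ℝ} {c' C' : ℝ}
    (H : KilledKernel p) (hc' : 0 < c') (hlow : SurvivalGE p c') (hup : SurvivalLE p C')
    (hLE : HalfLineLE p) (hGE : HalfLineGE p) (m : ℝ) :
    ∃ c C : ℝ, 0 < c ∧ c ≤ C ∧
      ∀ t x y : ℝ, 1 ≤ t → 1 < x → 1 < y → x ^ 2 ≤ m * t → y ^ 2 ≤ m * t →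
        c * (log x * log y / log (3 * t) ^ 2) * pk t x y ≤ p t x y ∧
        p t x y ≤ C * (log x * log y / log (3 * t) ^ 2) * pk t x y := by
  obtain ⟨c, hc, hge⟩ := H.exists_mul_logb_mul_logb_mul_pk_le hc' hlow hup hLE hGE m
  obtain ⟨C, hle⟩ := H.exists_le_mul_logb_mul_logb_mul_pk hup m
  refine ⟨c, max c C, hc, le_max_left c C, fun t x y ht hx hy hxm hym => ?_⟩
  rw [sq (log (3 * t)), ← div_mul_div_comm]
  refine ⟨hge t x y ht hx hy hxm hym, (hle t x y ht hx hy hxm hym).trans ?_⟩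
  have hlogx : 0 ≤ logb (3 * t) x := logb_nonneg (by linarith) hx.le
  have hlogy : 0 ≤ logb (3 * t) y := logb_nonneg (by linarith) hy.le
  have hpk := pk_nonneg (by linarith : 0 < t) x y
  exact mul_le_mul_of_nonneg_right
    (mul_le_mul_of_nonneg_right (le_max_right c C) (mul_nonneg hlogx hlogy)) hpk

theorem bessel_heat_kernel_estimate_both_small (p₁ : ℝ → ℝ → ℝ → ℝ) (q : ℝ → ℝ → ℝ)
    (H : BesselHK p₁ q) :
    ∀ m : ℝ, 2 ≤ m → ∃ c C : ℝ, 0 < c ∧ c ≤ C ∧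
      ∀ t x y : ℝ, 0 < t → 1 < x → 1 < y → x*y < t → x^2 ≤ m*t → y^2 ≤ m*t →
        c * (Real.log x * Real.log y / (Real.log (3*t))^2) * pk t x y ≤ p₁ t x y ∧
        p₁ t x y ≤ C * (Real.log x * Real.log y / (Real.log (3*t))^2) * pk t x y := by
  intro m _
  obtain ⟨c', C', hc', hlow, hup⟩ := H.exists_survivalGE_survivalLE
  obtain ⟨c, C, hc, hcC, hbounds⟩ := bessel_heat_kernel_estimate_both_small_general
    H.killedKernel hc' hlow hup H.halfLineLE H.halfLineGE m
  exact ⟨c, C, hc, hcC, fun t x y _ hx hy hxy => hbounds t x y (by nlinarith) hx hy⟩
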